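/- The functional J̃ : F × [0,∞) → ℝ, J̃(f,c) = (1/2)c³I₁(f) - (1/2)c²gA·I₂(f), with I₁(f) = ∫₀¹ F(y)²/(1-f(y)²) dy, I₂(f) = ∫₀¹ (1-f(y))y dy, F(y) = ∫_{-1}^y f'(s)s ds, has a unique global minimum at (f, c) = (id, (2/3)gA), where the minimal value is -g³A³/81. -/

import Mathlib

open Set Filter Topology MeasureTheory in
theorem aux_alg (a c I₁ I₂ K : ℝ) (ha : 0 < a) (hc : 0 ≤ c) (h2 : 0 < I₂) (hK : 0 < K)
    (hCS : 4 * I₂ ^ 2 ≤ I₁ * K) (h8 : 3 * K ^ 2 ≤ 8 * I₂) :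
    -(a ^ 3) / 81 ≤ 1 / 2 * c ^ 3 * I₁ - 1 / 2 * c ^ 2 * a * I₂ ∧
    (1 / 2 * c ^ 3 * I₁ - 1 / 2 * c ^ 2 * a * I₂ = -(a ^ 3) / 81 →
      8 * I₂ = 3 * K ^ 2 ∧ I₁ ^ 2 = 6 * I₂ ^ 3 ∧ c = 2 * a * I₂ / (3 * I₁)) := by
  have h1 : 0 < I₁ := by
    by_contra h
    push Not at h
    nlinarith [mul_nonneg (neg_nonneg.2 h) hK.le, pow_pos h2 2]
  have hsq : 16 * I₂ ^ 4 ≤ I₁ ^ 2 * K ^ 2 := by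
    have := pow_le_pow_left₀ (by positivity) hCS 2
    nlinarith
  have h6 : 6 * I₂ ^ 3 ≤ I₁ ^ 2 := by
    have e1 : I₁ ^ 2 * (3 * K ^ 2) ≤ I₁ ^ 2 * (8 * I₂) :=
      mul_le_mul_of_nonneg_left h8 (by positivity)
    have e2 : (8 * I₂) * (6 * I₂ ^ 3) ≤ (8 * I₂) * I₁ ^ 2 := by nlinarith
    exact le_of_mul_le_mul_left e2 (by positivity)
  have key : 1 / 2 * c ^ 3 * I₁ - 1 / 2 * c ^ 2 * a * I₂ =
      1 / 2 * (c - 2 * a * I₂ / (3 * I₁)) ^ 2 * ((c + a * I₂ / (3 * I₁)) * I₁)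
        - a ^ 3 * (2 / 27 * (I₂ ^ 3 / I₁ ^ 2)) := by
    field_simp
    ring
  have hq : I₂ ^ 3 / I₁ ^ 2 ≤ 1 / 6 := by
    rw [div_le_div_iff₀ (by positivity) (by norm_num)]; linarith
  have hr : 0 < (c + a * I₂ / (3 * I₁)) * I₁ := by positivity
  have hs : 0 ≤ 1 / 2 * (c - 2 * a * I₂ / (3 * I₁)) ^ 2 * ((c + a * I₂ / (3 * I₁)) * I₁) := by
    positivity
  have ha3 : 0 < a ^ 3 := by positivity
  have ht : a ^ 3 * (2 / 27 * (I₂ ^ 3 / I₁ ^ 2)) ≤ a ^ 3 * (1 / 81) :=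
    mul_le_mul_of_nonneg_left (by linarith) ha3.le
  refine ⟨by rw [key]; linarith, fun h => ?_⟩
  rw [key] at h
  have hz : 1 / 2 * (c - 2 * a * I₂ / (3 * I₁)) ^ 2 * ((c + a * I₂ / (3 * I₁)) * I₁) = 0 := by
    linarith
  have hz2 : a ^ 3 * (2 / 27 * (I₂ ^ 3 / I₁ ^ 2)) = a ^ 3 * (1 / 81) := by linarith
  have hz3 := mul_left_cancel₀ ha3.ne' hz2
  have hz4 : I₁ ^ 2 = 6 * I₂ ^ 3 := by
    have : I₂ ^ 3 / I₁ ^ 2 = 1 / 6 := by linarith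
    rw [div_eq_div_iff (by positivity) (by norm_num)] at this
    linarith
  refine ⟨?_, hz4, ?_⟩
  · rw [hz4] at hsq
    have : (2 * I₂ ^ 3) * (8 * I₂) ≤ (2 * I₂ ^ 3) * (3 * K ^ 2) := by nlinarith
    have := le_of_mul_le_mul_left this (by positivity)
    linarith
  · rcases mul_eq_zero.1 hz with h | h
    · have := pow_eq_zero_iff (two_ne_zero) |>.1 (by linarith : (c - 2 * a * I₂ / (3 * I₁)) ^ 2 = 0)
      linarith
    · exact absurd h hr.ne'

open Set Filter Topology MeasureTheory in
/-- The sharp lower bound for `∫ (1-f) y`. -/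
theorem aux_bound (f : ℝ → ℝ) (hf : ContinuousOn f (Icc 0 1))
    (hlt : ∀ y ∈ Ioo (0 : ℝ) 1, f y < 1 ∧ -1 < f y) :
    0 < (∫ y in (0 : ℝ)..1, (1 - f y) * y) ∧ 0 < (∫ y in (0 : ℝ)..1, (1 - f y ^ 2)) ∧
    3 * (∫ y in (0 : ℝ)..1, (1 - f y ^ 2)) ^ 2 ≤ 8 * (∫ y in (0 : ℝ)..1, (1 - f y) * y) ∧
    (8 * (∫ y in (0 : ℝ)..1, (1 - f y) * y) = 3 * (∫ y in (0 : ℝ)..1, (1 - f y ^ 2)) ^ 2 →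
      ∀ y ∈ Ioo (0 : ℝ) 1, f y = y) := by
  have ii : ∀ h : ℝ → ℝ, ContinuousOn h (Icc 0 1) → IntervalIntegrable h volume 0 1 := by
    intro h hh
    apply ContinuousOn.intervalIntegrable
    rwa [uIcc_of_le zero_le_one]
  have hc1 : ContinuousOn (fun y => (1 - f y) * y) (Icc 0 1) := by fun_prop
  have hc2 : ContinuousOn (fun y => 1 - f y ^ 2) (Icc 0 1) := by fun_prop
  have p1 : 0 < ∫ y in (0 : ℝ)..1, (1 - f y) * y := by
    apply intervalIntegral.intervalIntegral_pos_of_pos_on (ii _ hc1) _ zero_lt_one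
    intro y hy
    exact mul_pos (by linarith [(hlt y hy).1]) hy.1
  have p2 : 0 < ∫ y in (0 : ℝ)..1, (1 - f y ^ 2) := by
    apply intervalIntegral.intervalIntegral_pos_of_pos_on (ii _ hc2) _ zero_lt_one
    intro y hy
    nlinarith [(hlt y hy).1, (hlt y hy).2]
  set I := ∫ y in (0 : ℝ)..1, (1 - f y) * y with hI
  set K := ∫ y in (0 : ℝ)..1, (1 - f y ^ 2) with hK
  obtain ⟨t, ht⟩ : ∃ t, t = 3 / 2 * K := ⟨_, rfl⟩
  have tpos : 0 < t := by linarith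
  have hKt : K = 2 / 3 * t := by linarith
  have hD : ∫ y in (0 : ℝ)..1, ((1 - f y) * y - t / 2 * (1 - f y ^ 2)) = I - t / 2 * K := by
    rw [intervalIntegral.integral_sub (ii _ hc1) ((ii _ hc2).const_mul _),
      intervalIntegral.integral_const_mul]
  have hcD : ContinuousOn (fun y => (1 - f y) * y - t / 2 * (1 - f y ^ 2)) (Icc 0 1) := by fun_prop
  have poly : ∀ b : ℝ, ∫ y in (0 : ℝ)..b, (-(t - y) ^ 2 / (2 * t)) =
      (- (t ^ 3 - (t - b) ^ 3)) / (6 * t) := by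
    intro b
    have : ∀ y ∈ uIcc 0 b, HasDerivAt (fun y : ℝ => (t - y) ^ 3 / (6 * t))
        (-(t - y) ^ 2 / (2 * t)) y := by
      intro y _
      have := (((hasDerivAt_id y).const_sub t).pow 3).div_const (6 * t)
      refine HasDerivAt.congr_deriv this ?_
      simp only [id]
      field_simp
      norm_num
      ring
    rw [intervalIntegral.integral_eq_sub_of_hasDerivAt this]
    · field_simp; ring
    · apply Continuous.intervalIntegrable; fun_prop
  have ident : ∀ y, (1 - f y) * y - t / 2 * (1 - f y ^ 2) =
      t / 2 * (f y - y / t) ^ 2 + (-(t - y) ^ 2 / (2 * t)) := by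
    intro y; field_simp; ring
  rcases lt_trichotomy t 1 with h | h | h
  · -- t < 1
    have s1 : Icc 0 t ⊆ Icc (0 : ℝ) 1 := Icc_subset_Icc le_rfl h.le
    have s2 : Icc t 1 ⊆ Icc (0 : ℝ) 1 := Icc_subset_Icc tpos.le le_rfl
    have i1 : IntervalIntegrable (fun y => (1 - f y) * y - t / 2 * (1 - f y ^ 2)) volume 0 t := by
      apply ContinuousOn.intervalIntegrable
      rw [uIcc_of_le tpos.le]; exact hcD.mono s1
    have i2 : IntervalIntegrable (fun y => (1 - f y) * y - t / 2 * (1 - f y ^ 2)) volume t 1 := by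
      apply ContinuousOn.intervalIntegrable
      rw [uIcc_of_le h.le]; exact hcD.mono s2
    have e1 := intervalIntegral.integral_add_adjacent_intervals i1 i2
    have e2 : 0 < ∫ y in t..1, ((1 - f y) * y - t / 2 * (1 - f y ^ 2)) := by
      apply intervalIntegral.intervalIntegral_pos_of_pos_on i2 _ h
      intro y hy
      have hy' := hlt y ⟨tpos.trans hy.1, hy.2⟩
      have : 0 < (1 - f y) * (y - t / 2 * (1 + f y)) := by
        apply mul_pos (by linarith)
        nlinarith [hy.1]
      nlinarith
    have e3 : ∫ y in (0 : ℝ)..t, (-(t - y) ^ 2 / (2 * t)) ≤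
        ∫ y in (0 : ℝ)..t, ((1 - f y) * y - t / 2 * (1 - f y ^ 2)) := by
      apply intervalIntegral.integral_mono_on tpos.le _ i1
      · intro y hy
        rw [ident]
        have : 0 ≤ t / 2 * (f y - y / t) ^ 2 := by positivity
        linarith
      · apply Continuous.intervalIntegrable; fun_prop
    rw [poly] at e3
    have e4 : -(t ^ 3 - (t - t) ^ 3) / (6 * t) = - t ^ 2 / 6 := by field_simp; ring
    have e5 : 3 * K ^ 2 < 8 * I := by
      rw [e4] at e3
      rw [hKt] at hD ⊢
      nlinarith
    exact ⟨p1, p2, e5.le, fun h => absurd h e5.ne'⟩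
  · -- t = 1
    subst h
    have e1 : ∫ y in (0 : ℝ)..1, (1 / 2 * (f y - y / 1) ^ 2 + (-(1 - y) ^ 2 / (2 * 1))) =
        I - 1 / 2 * K := by
      rw [← hD]
      apply intervalIntegral.integral_congr
      intro y _
      exact (ident y).symm
    have hc3 : ContinuousOn (fun y => 1 / 2 * (f y - y / 1) ^ 2) (Icc 0 1) := by fun_prop
    rw [intervalIntegral.integral_add (ii _ hc3) (ii _ (by fun_prop)), poly] at e1
    have e2 : 0 ≤ ∫ y in (0 : ℝ)..1, 1 / 2 * (f y - y / 1) ^ 2 := by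
      apply intervalIntegral.integral_nonneg zero_le_one
      intro y _; positivity
    refine ⟨p1, p2, by rw [hKt] at e1 ⊢; linarith, fun heq => ?_⟩
    have e3 : ∫ y in (0 : ℝ)..1, 1 / 2 * (f y - y / 1) ^ 2 = 0 := by
      rw [hKt] at e1 heq; linarith
    intro y hy
    by_contra hne
    have : 0 < ∫ y in (0 : ℝ)..1, 1 / 2 * (f y - y / 1) ^ 2 := by
      apply intervalIntegral.integral_pos zero_lt_one hc3
      · intro y _; positivity
      · refine ⟨y, ⟨hy.1.le, hy.2.le⟩, ?_⟩
        have : f y - y / 1 ≠ 0 := by rw [div_one]; exact sub_ne_zero.2 hne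
        positivity
    linarith
  · -- t > 1
    have e3 : ∫ y in (0 : ℝ)..1, (-(t - y) ^ 2 / (2 * t)) ≤
        ∫ y in (0 : ℝ)..1, ((1 - f y) * y - t / 2 * (1 - f y ^ 2)) := by
      apply intervalIntegral.integral_mono_on zero_le_one _ (ii _ hcD)
      · intro y hy
        rw [ident]
        have : 0 ≤ t / 2 * (f y - y / t) ^ 2 := by positivity
        linarith
      · apply Continuous.intervalIntegrable; fun_prop
    rw [poly, hD, hKt] at e3
    have e4 : -(t ^ 3 - (t - 1) ^ 3) / (6 * t) = (t - 1) ^ 3 / (6 * t) - t ^ 2 / 6 := by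
      field_simp; ring
    have e6 : 0 < (t - 1) ^ 3 / (6 * t) := by
      have : 0 < t - 1 := by linarith
      positivity
    have e5 : 3 * K ^ 2 < 8 * I := by
      rw [e4] at e3
      rw [hKt]
      nlinarith
    exact ⟨p1, p2, e5.le, fun h => absurd h e5.ne'⟩

open Set Filter Topology MeasureTheory in
theorem aux_CS (f f' : ℝ → ℝ)
    (hd : ∀ y ∈ Icc (-1 : ℝ) 1, HasDerivWithinAt f (f' y) (Icc (-1 : ℝ) 1) y)
    (hf' : ContinuousOn f' (Icc (-1 : ℝ) 1))
    (h1 : f 1 = 1) (hm1 : f (-1) = -1) (hp : 0 < f' 1)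
    (hr : ∀ y ∈ Ioo (-1 : ℝ) 1, f y ∈ Ioo (-1 : ℝ) 1)
    (hodd : ∀ y ∈ Icc (-1 : ℝ) 1, f (-y) = -f y)
    (hK : 0 < ∫ y in (0 : ℝ)..1, (1 - f y ^ 2)) :
    4 * (∫ y in (0 : ℝ)..1, (1 - f y) * y) ^ 2 ≤
      (∫ y in (0 : ℝ)..1, (∫ s in (-1 : ℝ)..y, f' s * s) ^ 2 / (1 - (f y) ^ 2)) *
      (∫ y in (0 : ℝ)..1, (1 - f y ^ 2)) := by
  have hle : (-1 : ℝ) ≤ 1 := by norm_num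
  have hfc : ContinuousOn f (Icc (-1 : ℝ) 1) := fun y hy => (hd y hy).continuousWithinAt
  have hsub : Icc (0 : ℝ) 1 ⊆ Icc (-1 : ℝ) 1 := Icc_subset_Icc (by norm_num) le_rfl
  have hfc0 := hfc.mono hsub
  obtain ⟨φ, hφc, hφ⟩ : ∃ φ : ℝ → ℝ, Continuous φ ∧ ∀ y ∈ Icc (-1 : ℝ) 1, φ y = f' y := by
    refine ⟨IccExtend hle ((Icc (-1 : ℝ) 1).domRestrict f'), ?_, ?_⟩
    · exact (continuousOn_iff_continuous_domRestrict.1 hf').Icc_extend'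
    · intro y hy
      rw [IccExtend_of_mem _ _ hy]; rfl
  obtain ⟨F, hF⟩ : ∃ F : ℝ → ℝ, ∀ y, F y = ∫ s in (-1 : ℝ)..y, φ s * s := ⟨_, fun _ => rfl⟩
  have hFf : ∀ y ∈ Icc (-1 : ℝ) 1, ∫ s in (-1 : ℝ)..y, f' s * s = F y := by
    intro y hy
    rw [hF]
    apply intervalIntegral.integral_congr
    intro s hs
    rw [uIcc_of_le hy.1] at hs
    simp only
    rw [hφ s ⟨hs.1, hs.2.trans hy.2⟩]
  have hFd : ∀ y, HasDerivAt F (φ y * y) y := by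
    intro y
    have : F = fun y => ∫ s in (-1 : ℝ)..y, φ s * s := funext hF
    rw [this]
    exact ((by fun_prop : Continuous fun s => φ s * s).integral_hasStrictDerivAt (-1) y).hasDerivAt
  have hFc : Continuous F := continuous_iff_continuousAt.2 fun y => (hFd y).continuousAt
  have hdi : ∀ y ∈ Ioo (-1 : ℝ) 1, HasDerivAt f (φ y) y := by
    intro y hy
    rw [hφ y ⟨hy.1.le, hy.2.le⟩]
    exact (hd y ⟨hy.1.le, hy.2.le⟩).hasDerivAt (Icc_mem_nhds hy.1 hy.2)
  have iif : IntervalIntegrable f volume (-1) 1 := by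
    apply ContinuousOn.intervalIntegrable
    rwa [uIcc_of_le hle]
  have hint0 : ∫ y in (-1 : ℝ)..1, f y = 0 := by
    have e1 : ∫ y in (-1 : ℝ)..1, f (-y) = ∫ y in (-1 : ℝ)..1, f y := by
      rw [intervalIntegral.integral_comp_neg]; simp
    have e2 : ∫ y in (-1 : ℝ)..1, f (-y) = ∫ y in (-1 : ℝ)..1, -f y := by
      apply intervalIntegral.integral_congr
      intro s hs
      rw [uIcc_of_le hle] at hs
      exact hodd s hs
    rw [intervalIntegral.integral_neg] at e2
    linarith
  have hF1 : F 1 = 0 := by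
    have iφ : IntervalIntegrable (fun s => φ s * s) volume (-1) 1 :=
      Continuous.intervalIntegrable (by fun_prop) _ _
    have := intervalIntegral.integral_eq_sub_of_hasDerivAt_of_le hle
      (f := fun y => f y * y) (f' := fun y => φ y * y + f y) (by fun_prop)
      (fun y hy => ((hdi y hy).mul (hasDerivAt_id y)).congr_deriv (by simp)) (iφ.add iif)
    rw [intervalIntegral.integral_add iφ iif, hint0, ← hF] at this
    simp only [h1, hm1] at this
    linarith
  have ii : ∀ h : ℝ → ℝ, ContinuousOn h (Icc 0 1) → IntervalIntegrable h volume 0 1 := by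
    intro h hh
    apply ContinuousOn.intervalIntegrable
    rwa [uIcc_of_le zero_le_one]
  have hI2 : ∫ y in (0 : ℝ)..1, (2 * ((1 - f y) * y) + F y) = 0 := by
    have := intervalIntegral.integral_eq_sub_of_hasDerivAt_of_le (zero_le_one' ℝ)
      (f := fun y => y ^ 2 * (1 - f y) + y * F y) (f' := fun y => 2 * ((1 - f y) * y) + F y)
      (by fun_prop)
      (fun y hy => by
        have hy' : y ∈ Ioo (-1 : ℝ) 1 := ⟨by linarith [hy.1], hy.2⟩
        have := (((hasDerivAt_id y).pow 2).mul ((hdi y hy').const_sub 1)).add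
          ((hasDerivAt_id y).mul (hFd y))
        refine HasDerivAt.congr_deriv this ?_
        simp only [id, Pi.pow_apply]
        ring)
      (ii _ (by fun_prop))
    rw [this]; simp [h1, hF1]
  have hcQ : ContinuousOn (fun y => F y ^ 2 / (1 - f y ^ 2)) (Icc 0 1) := by
    intro y hy
    rcases eq_or_lt_of_le hy.2 with h | h
    · subst h
      rw [← continuousWithinAt_sdiff_self]
      have t1 : Tendsto (slope F 1) (𝓝[Icc 0 1 \ {1}] 1) (𝓝 (φ 1 * 1)) :=
        (hasDerivWithinAt_iff_tendsto_slope.1 (hFd 1).hasDerivWithinAt)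
      have t2 : Tendsto (slope f 1) (𝓝[Icc 0 1 \ {1}] 1) (𝓝 (f' 1)) :=
        (hasDerivWithinAt_iff_tendsto_slope.1 ((hd 1 (by norm_num)).mono hsub))
      have t3 : Tendsto f (𝓝[Icc 0 1 \ {1}] 1) (𝓝 (f 1)) :=
        (hfc0 1 (by norm_num)).mono sdiff_subset
      have t4 : Tendsto (fun y : ℝ => y - 1) (𝓝[Icc 0 1 \ {1}] 1) (𝓝 (1 - 1)) :=
        (Continuous.tendsto (by fun_prop) 1).mono_left nhdsWithin_le_nhds
      have t5 := ((t1.pow 2).mul t4).div (t2.neg.mul (t3.const_add 1))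
        (by rw [h1]; nlinarith)
      unfold ContinuousWithinAt
      have e : F 1 ^ 2 / (1 - f 1 ^ 2) = (φ 1 * 1) ^ 2 * (1 - 1) / (-f' 1 * (1 + f 1)) := by
        simp [hF1]
      simp only [e]
      refine t5.congr' ?_
      filter_upwards [self_mem_nhdsWithin] with y hy
      have hy1 : y - 1 ≠ 0 := sub_ne_zero.2 hy.2
      have hy2 := hr y ⟨by linarith [hy.1.1], lt_of_le_of_ne hy.1.2 hy.2⟩
      have a1 : 1 - f y ≠ 0 := by linarith [hy2.2]
      have a2 : 1 + f y ≠ 0 := by linarith [hy2.1]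
      have a3 : 1 - f y ^ 2 = (1 - f y) * (1 + f y) := by ring
      simp only [Pi.div_apply, Pi.mul_apply, Pi.neg_apply, Pi.pow_apply, slope_def_field, hF1, h1, a3, sub_zero]
      have a4 : f y - 1 = -(1 - f y) := by ring
      rw [a4]
      field_simp
    · have hy2 := hr y ⟨by linarith [hy.1], h⟩
      apply ContinuousWithinAt.div
      · exact (hFc.pow 2).continuousWithinAt
      · exact continuousWithinAt_const.sub ((hfc0 y hy).pow 2)
      · nlinarith [hy2.1, hy2.2]
  have hI1 : (∫ y in (0 : ℝ)..1, (∫ s in (-1 : ℝ)..y, f' s * s) ^ 2 / (1 - (f y) ^ 2)) =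
      ∫ y in (0 : ℝ)..1, F y ^ 2 / (1 - f y ^ 2) := by
    apply intervalIntegral.integral_congr
    intro s hs
    rw [uIcc_of_le zero_le_one] at hs
    simp only
    rw [hFf s (hsub hs)]
  rw [hI1]
  have hc1 : ContinuousOn (fun y => (1 - f y) * y) (Icc 0 1) := by fun_prop
  have hc2 : ContinuousOn (fun y => 1 - f y ^ 2) (Icc 0 1) := by fun_prop
  rw [intervalIntegral.integral_add ((ii _ hc1).const_mul _) (ii _ hFc.continuousOn),
    intervalIntegral.integral_const_mul] at hI2
  set I := ∫ y in (0 : ℝ)..1, (1 - f y) * y with hI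
  set K := ∫ y in (0 : ℝ)..1, (1 - f y ^ 2) with hKdef
  set Q := ∫ y in (0 : ℝ)..1, F y ^ 2 / (1 - f y ^ 2) with hQ
  have hlam : ∀ l : ℝ, 0 ≤ Q + 2 * l * (-(2 * I)) + l ^ 2 * K := by
    intro l
    have e : ∫ y in (0 : ℝ)..1, (F y ^ 2 / (1 - f y ^ 2) + 2 * l * F y + l ^ 2 * (1 - f y ^ 2)) =
        Q + 2 * l * (-(2 * I)) + l ^ 2 * K := by
      rw [intervalIntegral.integral_add ((ii _ hcQ).add ((ii _ hFc.continuousOn).const_mul _))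
        ((ii _ hc2).const_mul _), intervalIntegral.integral_add (ii _ hcQ)
        ((ii _ hFc.continuousOn).const_mul _), intervalIntegral.integral_const_mul,
        intervalIntegral.integral_const_mul]
      have : ∫ y in (0 : ℝ)..1, F y = -(2 * I) := by linarith
      rw [this]
    rw [← e]
    apply intervalIntegral.integral_nonneg zero_le_one
    intro y hy
    rcases eq_or_lt_of_le hy.2 with h | h
    · subst h; simp [hF1, h1]
    · have hy2 := hr y ⟨by linarith [hy.1], h⟩
      have hw : 0 < 1 - f y ^ 2 := by nlinarith [hy2.1, hy2.2]
      have : F y ^ 2 / (1 - f y ^ 2) + 2 * l * F y + l ^ 2 * (1 - f y ^ 2) =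
          (F y + l * (1 - f y ^ 2)) ^ 2 / (1 - f y ^ 2) := by
        field_simp; ring
      rw [this]; positivity
  have h := hlam (2 * I / K)
  have e : Q + 2 * (2 * I / K) * (-(2 * I)) + (2 * I / K) ^ 2 * K = (Q * K - 4 * I ^ 2) / K := by
    field_simp; ring
  rw [e] at h
  have := mul_nonneg h hK.le
  rw [div_mul_cancel₀ _ hK.ne'] at this
  linarith

theorem aux_I2id : ∫ y in (0 : ℝ)..1, (1 - y) * y = 1 / 6 := by
  have : ∀ y : ℝ, (1 - y) * y = y - y ^ 2 := fun y => by ring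
  simp_rw [this]
  rw [intervalIntegral.integral_sub (Continuous.intervalIntegrable (by fun_prop) _ _)
    (Continuous.intervalIntegrable (by fun_prop) _ _), integral_pow, integral_id]
  norm_num

theorem stmt_12 (g A : ℝ) (hg : 0 < g) (hA : 0 < A) :
    (1 / 2 * (2 / 3 * g * A) ^ 3 *
          (∫ y in (0 : ℝ)..1, (∫ s in (-1 : ℝ)..y, (1 : ℝ) * s) ^ 2 / (1 - y ^ 2)) -
        1 / 2 * (2 / 3 * g * A) ^ 2 * (g * A) * (∫ y in (0 : ℝ)..1, (1 - y) * y) =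
      -(g ^ 3 * A ^ 3) / 81) ∧
    ∀ f f' : ℝ → ℝ,
      (∀ y ∈ Set.Icc (-1 : ℝ) 1, HasDerivWithinAt f (f' y) (Set.Icc (-1 : ℝ) 1) y) →
      ContinuousOn f' (Set.Icc (-1 : ℝ) 1) →
      f 1 = 1 → f (-1) = -1 → 0 < f' 1 → 0 < f' (-1) →
      (∀ y ∈ Set.Ioo (-1 : ℝ) 1, f y ∈ Set.Ioo (-1 : ℝ) 1) →
      (∀ y ∈ Set.Icc (-1 : ℝ) 1, f (-y) = -f y) →
      ∀ c : ℝ, 0 ≤ c →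
        (-(g ^ 3 * A ^ 3) / 81 ≤
          1 / 2 * c ^ 3 * (∫ y in (0 : ℝ)..1, (∫ s in (-1 : ℝ)..y, f' s * s) ^ 2 / (1 - (f y) ^ 2)) -
            1 / 2 * c ^ 2 * (g * A) * (∫ y in (0 : ℝ)..1, (1 - f y) * y)) ∧
        (1 / 2 * c ^ 3 * (∫ y in (0 : ℝ)..1, (∫ s in (-1 : ℝ)..y, f' s * s) ^ 2 / (1 - (f y) ^ 2)) -
            1 / 2 * c ^ 2 * (g * A) * (∫ y in (0 : ℝ)..1, (1 - f y) * y) =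
            -(g ^ 3 * A ^ 3) / 81 →
          (∀ y ∈ Set.Icc (-1 : ℝ) 1, f y = y) ∧ c = 2 / 3 * g * A) := by
  constructor
  · have e1 : (∫ y in (0 : ℝ)..1, (∫ s in (-1 : ℝ)..y, (1 : ℝ) * s) ^ 2 / (1 - y ^ 2)) = 1 / 6 := by
      have : ∀ y : ℝ, (∫ s in (-1 : ℝ)..y, (1 : ℝ) * s) ^ 2 / (1 - y ^ 2) =
          1 / 4 - 1 / 4 * y ^ 2 := by
        intro y
        have : ∫ s in (-1 : ℝ)..y, (1 : ℝ) * s = (y ^ 2 - 1) / 2 := by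
          simp [integral_id]
        rw [this]
        by_cases h : 1 - y ^ 2 = 0
        · rw [h, div_zero]; linarith
        · field_simp; ring
      simp_rw [this]
      rw [intervalIntegral.integral_sub (by simp)
        (Continuous.intervalIntegrable (by fun_prop) _ _), intervalIntegral.integral_const_mul,
        integral_pow]
      norm_num
    rw [e1, aux_I2id]
    ring
  · intro f f' hd hf' h1 hm1 hp _ hr hodd c hc
    have hsub : Set.Icc (0 : ℝ) 1 ⊆ Set.Icc (-1 : ℝ) 1 := Set.Icc_subset_Icc (by norm_num) le_rfl
    have hfc : ContinuousOn f (Set.Icc (0 : ℝ) 1) :=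
      ContinuousOn.mono (fun y hy => (hd y hy).continuousWithinAt) hsub
    obtain ⟨p1, p2, p3, p4⟩ := aux_bound f hfc (fun y hy => by
      have := hr y ⟨by linarith [hy.1], hy.2⟩
      exact ⟨this.2, this.1⟩)
    have hCS := aux_CS f f' hd hf' h1 hm1 hp hr hodd p2
    obtain ⟨q1, q2⟩ := aux_alg (g * A) c _ _ _ (mul_pos hg hA) hc p1 p2 hCS p3
    rw [← mul_pow]
    refine ⟨q1, fun h => ?_⟩
    obtain ⟨r1, r2, r3⟩ := q2 h
    have hf := p4 r1
    have h0 : f 0 = 0 := by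
      have := hodd 0 (by norm_num)
      rw [neg_zero] at this
      linarith
    have hfpos : ∀ y ∈ Set.Icc (0 : ℝ) 1, f y = y := by
      intro y hy
      rcases eq_or_lt_of_le hy.1 with h | h
      · rw [← h, h0]
      · rcases eq_or_lt_of_le hy.2 with h' | h'
        · rw [h', h1]
        · exact hf y ⟨h, h'⟩
    have hI2 : ∫ y in (0 : ℝ)..1, (1 - f y) * y = 1 / 6 := by
      rw [← aux_I2id]
      apply intervalIntegral.integral_congr
      intro y hy
      rw [Set.uIcc_of_le zero_le_one] at hy
      simp only
      rw [hfpos y hy]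
    refine ⟨?_, ?_⟩
    · intro y hy
      rcases le_total 0 y with h | h
      · exact hfpos y ⟨h, hy.2⟩
      · have e1 := hfpos (-y) ⟨by linarith, by linarith [hy.1]⟩
        have e2 := hodd y hy
        linarith
    · rw [hI2] at r2 r3 hCS
      have hI1 : (∫ y in (0 : ℝ)..1,
          (∫ s in (-1 : ℝ)..y, f' s * s) ^ 2 / (1 - (f y) ^ 2)) = 1 / 6 := by
        have hpos : 0 < (∫ y in (0 : ℝ)..1,
            (∫ s in (-1 : ℝ)..y, f' s * s) ^ 2 / (1 - (f y) ^ 2)) :=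
          pos_of_mul_pos_left (lt_of_lt_of_le (by norm_num) hCS) p2.le
        nlinarith
      rw [hI1] at r3
      rw [r3]; ring
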